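/- Let H be a primitive, aperiodic and marked substitution over a finite alphabet A, with Perron–Frobenius eigenvalue λ of its incidence matrix. Then there exist a real number θ with 0 < θ < λ, a finite set C of positive real numbers, and a constant M > 0, such that for every bispecial word w of L_H there exist c ∈ C and an integer n ≥ 0 with | |w| − c·λ^n | ≤ M·θ^n. -/

import Mathlib

open Filter Topology MeasureTheory

variable {A : Type*}

/-- The shift map on infinite words. -/
def shift (x : ℕ → A) : ℕ → A := fun n => x (n + 1)

/-- Image of a finite word under a substitution. -/
def wordMap (H : A → List A) (w : List A) : List A := w.flatMap H

/-- Image of an infinite word under a substitution (each `H a` nonempty makes this the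
infinite concatenation `H(x₀)H(x₁)⋯`). -/
def substSeq (H : A → List A) (x : ℕ → A) : ℕ → A :=
  fun n => (wordMap H ((List.range (n + 1)).map x)).getD n (x 0)

/-- The prefix of length `n` of an infinite word. -/
def prefixWord (x : ℕ → A) (n : ℕ) : List A := (List.range n).map x

/-- The factor of length `n` at position `i` of an infinite word. -/
def factorAt (x : ℕ → A) (i n : ℕ) : List A := (List.range n).map fun j => x (i + j)

/-- The language of an infinite word: the set of its finite factors. -/
def Lang (u : ℕ → A) : Set (List A) := {w | ∃ i, w = factorAt u i w.length}

/-- A sequence is (purely) periodic for the shift. -/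
def PeriodicSeq (x : ℕ → A) : Prop := ∃ m, 0 < m ∧ ∀ n, x (n + m) = x n

/-- `u` is a fixed point of the substitution `H`. -/
def IsFixedPointSubst (H : A → List A) (u : ℕ → A) : Prop := substSeq H u = u

/-- `H` is primitive: some power of `H` maps every letter onto a word containing
every letter. -/
def PrimitiveSubst (H : A → List A) : Prop :=
  ∃ k, 0 < k ∧ ∀ a b : A, b ∈ (wordMap H)^[k] [a]

/-- `H` is aperiodic: no fixed point of `H` is periodic for the shift. -/
def AperiodicSubst (H : A → List A) : Prop :=
  ∀ u : ℕ → A, IsFixedPointSubst H u → ¬ PeriodicSeq u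

/-- `H` is marked: first letters of images are pairwise distinct, and so are last letters. -/
def MarkedSubst (H : A → List A) (hne : ∀ a, H a ≠ []) : Prop :=
  Function.Injective (fun a => (H a).head (hne a)) ∧
  Function.Injective (fun a => (H a).getLast (hne a))

/-- `H` is 2-full (with respect to the fixed point `u`): every word of length 2 belongs
to the language. -/
def TwoFull (H : A → List A) (u : ℕ → A) : Prop :=
  ∀ w : List A, w.length = 2 → w ∈ Lang u

/-- The attractor `K`: closure of the shift-orbit of the fixed point `u`. -/
def orbitClosure [TopologicalSpace A] (u : ℕ → A) : Set (ℕ → A) :=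
  closure {y | ∃ n, y = shift^[n] u}

/-- `δ(x)`: the length of the maximal prefix of `x` belonging to the language of `u`. -/
noncomputable def delta (u x : ℕ → A) : ℕ := sSup {n | prefixWord x n ∈ Lang u}

/-- The renormalization operator `R`. -/
noncomputable def renorm (H : A → List A) (V : (ℕ → A) → ℝ) : (ℕ → A) → ℝ :=
  fun x => ∑ i ∈ Finset.range (H (x 0)).length, V (shift^[i] (substSeq H x))

/-- `t_n(x) = |H^n(x₀)|`. -/
def tlen (H : A → List A) (n : ℕ) (x : ℕ → A) : ℕ := ((wordMap H)^[n] [x 0]).length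

/-- An accident occurs at time `b`. -/
def AccidentAt (u x : ℕ → A) (b : ℕ) : Prop :=
  0 < b ∧ delta u x - b < delta u (shift^[b] x) ∧
    ∀ i < b, delta u (shift^[i] x) = delta u x - i

/-- The first accident time of `x` (junk value `0` if there is none). -/
noncomputable def firstAccident (u x : ℕ → A) : ℕ := sInf {b | AccidentAt u x b}

/-- The `j`-th accident time `B_j` of `x`, defined inductively. -/
noncomputable def accidentTime (u x : ℕ → A) : ℕ → ℕ
  | 0 => 0
  | j + 1 => accidentTime u x j + firstAccident u (shift^[accidentTime u x j] x)

/-- The set of (genuine) accident times of `x`. -/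
def AccidentSet (u x : ℕ → A) : Set ℕ :=
  {B | ∃ j : ℕ, B = accidentTime u x (j + 1) ∧
        AccidentAt u (shift^[accidentTime u x j] x)
          (firstAccident u (shift^[accidentTime u x j] x))}

/-- A word is right special. -/
def RightSpecial (u : ℕ → A) (w : List A) : Prop :=
  ∃ b c : A, b ≠ c ∧ w ++ [b] ∈ Lang u ∧ w ++ [c] ∈ Lang u

/-- A word is left special. -/
def LeftSpecial (u : ℕ → A) (w : List A) : Prop :=
  ∃ a b : A, a ≠ b ∧ a :: w ∈ Lang u ∧ b :: w ∈ Lang u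

/-- A word is bispecial. -/
def Bispecial (u : ℕ → A) (w : List A) : Prop := RightSpecial u w ∧ LeftSpecial u w

/-- `l` is a recognizability constant for `H`: every long enough word of the language
admits a unique desubstitution. -/
def RecogBound (H : A → List A) (u : ℕ → A) (l : ℕ) : Prop :=
  ∀ z ∈ Lang u, l < z.length →
    ∃! d : List A × List A × List A,
      ∃ s p : A,
        z = d.1 ++ wordMap H d.2.1 ++ d.2.2 ∧
        d.2.1 ∈ Lang u ∧
        d.1 <:+ H s ∧ d.1.length < (H s).length ∧
        d.2.2 <+: H p ∧ d.2.2.length < (H p).length ∧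
        ([s] ++ d.2.1 ++ [p]) ∈ Lang u

/-- The incidence matrix of a substitution, with real entries. -/
def incMat [Fintype A] [DecidableEq A] (H : A → List A) : Matrix A A ℝ :=
  fun a b => ((H a).count b : ℝ)

/-- `lam` is the Perron–Frobenius eigenvalue of the incidence matrix of the (primitive)
substitution `H`: it admits an entrywise positive eigenvector. -/
def IsPerronValue [Fintype A] [DecidableEq A] (H : A → List A) (lam : ℝ) : Prop :=
  ∃ v : A → ℝ, (∀ a, 0 < v a) ∧ (incMat H).mulVec v = lam • v

/-- Concatenation of a finite word with an infinite word. -/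
def catWord (S : List A) (y : ℕ → A) : ℕ → A :=
  fun n => S.getD n (y (n - S.length))

/-!
In the factorization `u = H(u₀)H(u₁)⋯`, call *phase* of a position the type of the block covering
it together with the offset inside this block. If two occurrences of a word are never
synchronized, then the phase in each of them determines the block that starts at a cut of the
other one, because `H` is marked. The pair of phases thus evolves deterministically on a finite
set and becomes periodic, with a bounded period. By uniform recurrence an aperiodic fixed point
has no such long periodic factors, so that all occurrences of a long word have the same cuts. If
the word is bispecial, it starts and ends at cuts and is the image of a shorter bispecial word.

Hence every bispecial word is `Hⁿ(z)` with `z` of bounded length. Conjugating the incidence matrix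
`M` by a positive eigenvector `v` gives `λ` times a stochastic matrix, some power of which has
positive entries and contracts the spread of vectors. Therefore `λ⁻ⁿMⁿ1` converges exponentially
fast to a multiple of `v`, and so does `|Hⁿ(z)| / λⁿ` to a positive constant.
-/

section WordMap

variable {H : A → List A}

theorem wordMap_append (H : A → List A) (x y : List A) :
    wordMap H (x ++ y) = wordMap H x ++ wordMap H y :=
  List.flatMap_append

theorem wordMap_cons (H : A → List A) (a : A) (w : List A) :
    wordMap H (a :: w) = H a ++ wordMap H w :=
  List.flatMap_cons

theorem wordMap_singleton (H : A → List A) (a : A) : wordMap H [a] = H a :=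
  List.flatMap_singleton ..

theorem iterate_wordMap_nil (H : A → List A) (n : ℕ) : (wordMap H)^[n] [] = [] :=
  Function.iterate_fixed rfl n

theorem mul_length_le_length_wordMap {c : ℕ} (hc : ∀ a, c ≤ (H a).length) (w : List A) :
    c * w.length ≤ (wordMap H w).length := by
  induction w with
  | nil => simp
  | cons a w ih =>
    rw [wordMap_cons, List.length_append, List.length_cons]
    linarith [hc a]

theorem pow_mul_length_le_length_iterate {c : ℕ} (hc : ∀ a, c ≤ (H a).length) (n : ℕ)
    (w : List A) : c ^ n * w.length ≤ ((wordMap H)^[n] w).length := by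
  induction n with
  | zero => simp
  | succ n ih =>
    rw [Function.iterate_succ_apply', pow_succ', mul_assoc]
    exact (Nat.mul_le_mul_left c ih).trans (mul_length_le_length_wordMap hc _)

theorem wordMap_injective (hne : ∀ a, H a ≠ [])
    (hhead : Function.Injective fun a => (H a).head (hne a)) :
    Function.Injective (wordMap H) := by
  intro x
  induction x with
  | nil =>
    rintro (_ | ⟨b, y⟩) h
    · rfl
    · simp [wordMap, hne] at h
  | cons a x ih =>
    rintro (_ | ⟨b, y⟩) h
    · simp [wordMap, hne] at h
    · rw [wordMap_cons, wordMap_cons] at h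
      obtain rfl : a = b := hhead <| by
        simpa [List.head?_append, List.head?_eq_some_head, hne] using congrArg List.head? h
      rw [ih (List.append_cancel_left h)]

/-- The power `Hⁿ` of a substitution, as a substitution. -/
def substPow (H : A → List A) (n : ℕ) : A → List A := fun a => (wordMap H)^[n] [a]

theorem wordMap_substPow (H : A → List A) (n : ℕ) :
    wordMap (substPow H n) = (wordMap H)^[n] := by
  induction n with
  | zero => exact funext List.flatMap_singleton'
  | succ n ih =>
    have hsucc : substPow H (n + 1) = fun a => wordMap H (substPow H n a) :=
      funext fun a => Function.iterate_succ_apply' (wordMap H) n [a]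
    funext w
    rw [Function.iterate_succ_apply', ← ih, hsucc]
    exact List.flatMap_assoc.symm

theorem substPow_ne_nil (hne : ∀ a, H a ≠ []) (n : ℕ) (a : A) : substPow H n a ≠ [] := by
  have one_le (b : A) : 1 ≤ (H b).length := List.length_pos_of_ne_nil (hne b)
  have h := pow_mul_length_le_length_iterate one_le n [a]
  rw [one_pow, one_mul, List.length_singleton] at h
  exact List.length_pos_iff.1 h

end WordMap

section Growth

variable [Finite A] [Nontrivial A] {H : A → List A}

theorem PrimitiveSubst.exists_two_pow_mul_length_le (hprim : PrimitiveSubst H) :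
    ∃ k, ∀ (n : ℕ) (w : List A), 2 ^ n * w.length ≤ ((wordMap H)^[k * n] w).length := by
  classical
  have := Fintype.ofFinite A
  obtain ⟨k, -, hk⟩ := hprim
  have two_le (a : A) : 2 ≤ (substPow H k a).length :=
    calc 2 ≤ (Finset.univ : Finset A).card := Fintype.one_lt_card
      _ ≤ (substPow H k a).toFinset.card :=
        Finset.card_le_card fun b _ => List.mem_toFinset.2 (hk a b)
      _ ≤ (substPow H k a).length := List.toFinset_card_le _
  refine ⟨k, fun n w => ?_⟩
  rw [Function.iterate_mul, ← wordMap_substPow]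
  exact pow_mul_length_le_length_iterate two_le n w

theorem PrimitiveSubst.exists_lt_length_iterate (hprim : PrimitiveSubst H) (n : ℕ) :
    ∃ m, ∀ w : List A, w ≠ [] → n < ((wordMap H)^[m] w).length := by
  obtain ⟨k, hk⟩ := hprim.exists_two_pow_mul_length_le
  refine ⟨k * n, fun w hw => ?_⟩
  calc n < 2 ^ n := Nat.lt_two_pow_self
    _ ≤ 2 ^ n * w.length := Nat.le_mul_of_pos_right _ (List.length_pos_of_ne_nil hw)
    _ ≤ _ := hk n w

theorem PrimitiveSubst.exists_iterate_of_forall_desubst (hprim : PrimitiveSubst H)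
    {p : List A → Prop} {N : ℕ}
    (hp : ∀ w, p w → N < w.length → ∃ v, p v ∧ wordMap H v = w) {w : List A} (hw : p w) :
    ∃ (n : ℕ) (z : List A), z.length ≤ N ∧ (wordMap H)^[n] z = w := by
  by_contra! hshort
  have hlong (n : ℕ) : ∃ z, p z ∧ (wordMap H)^[n] z = w := by
    induction n with
    | zero => exact ⟨w, hw, rfl⟩
    | succ n ih =>
      obtain ⟨z, hz, hzw⟩ := ih
      obtain ⟨v, hv, rfl⟩ := hp z hz (not_le.1 fun hle => hshort n z hle hzw)
      exact ⟨v, hv, hzw⟩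
  obtain ⟨m, hm⟩ := hprim.exists_lt_length_iterate w.length
  obtain ⟨z, -, hzw⟩ := hlong m
  have hz : z ≠ [] := by
    rintro rfl
    exact hshort m [] (Nat.zero_le N) hzw
  exact (hm z hz).ne' (congrArg List.length hzw)

end Growth

section Factors

variable {u : ℕ → A}

theorem length_factorAt (u : ℕ → A) (i n : ℕ) : (factorAt u i n).length = n := by
  simp [factorAt]

theorem getElem?_factorAt (u : ℕ → A) (i : ℕ) {n s : ℕ} (hs : s < n) :
    (factorAt u i n)[s]? = some (u (i + s)) := by
  simp [factorAt, hs]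

theorem factorAt_add (u : ℕ → A) (i m n : ℕ) :
    factorAt u i (m + n) = factorAt u i m ++ factorAt u (i + m) n := by
  simp [factorAt, List.range_add, Nat.add_assoc]

theorem factorAt_one (u : ℕ → A) (i : ℕ) : factorAt u i 1 = [u i] := by
  simp [factorAt]

/-- The finite word `w` occurs in the infinite word `u` at position `i`. -/
def OccursAt (u : ℕ → A) (w : List A) (i : ℕ) : Prop := factorAt u i w.length = w

theorem OccursAt.getElem? {w : List A} {i : ℕ} (h : OccursAt u w i) {s : ℕ}
    (hs : s < w.length) : w[s]? = some (u (i + s)) := by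
  rw [← getElem?_factorAt u i hs, h]

theorem OccursAt.apply_eq {w : List A} {i j : ℕ} (hi : OccursAt u w i) (hj : OccursAt u w j)
    {s : ℕ} (hs : s < w.length) : u (i + s) = u (j + s) :=
  Option.some.inj ((hi.getElem? hs).symm.trans (hj.getElem? hs))

theorem occursAt_append {x y : List A} {i : ℕ} :
    OccursAt u (x ++ y) i ↔ OccursAt u x i ∧ OccursAt u y (i + x.length) := by
  rw [OccursAt, List.length_append, factorAt_add]
  exact ⟨fun h => List.append_inj h (length_factorAt ..), fun h => congrArg₂ _ h.1 h.2⟩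

theorem occursAt_singleton {a : A} {i : ℕ} : OccursAt u [a] i ↔ u i = a := by
  simp [OccursAt, factorAt_one]

theorem occursAt_cons {a : A} {w : List A} {i : ℕ} :
    OccursAt u (a :: w) i ↔ u i = a ∧ OccursAt u w (i + 1) := by
  rw [← List.singleton_append, occursAt_append, occursAt_singleton, List.length_singleton]

theorem occursAt_factorAt (u : ℕ → A) (i n : ℕ) : OccursAt u (factorAt u i n) i := by
  rw [OccursAt, length_factorAt]

theorem mem_Lang_iff {w : List A} : w ∈ Lang u ↔ ∃ i, OccursAt u w i :=
  exists_congr fun _ => eq_comm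

theorem rightSpecial_iff {w : List A} :
    RightSpecial u w ↔ ∃ i j, OccursAt u w i ∧ OccursAt u w j ∧
      u (i + w.length) ≠ u (j + w.length) := by
  simp only [RightSpecial, mem_Lang_iff, occursAt_append, occursAt_singleton]
  constructor
  · rintro ⟨b, c, hbc, ⟨i, hi, rfl⟩, j, hj, rfl⟩
    exact ⟨i, j, hi, hj, hbc⟩
  · rintro ⟨i, j, hi, hj, hij⟩
    exact ⟨_, _, hij, ⟨i, hi, rfl⟩, j, hj, rfl⟩

theorem leftSpecial_iff {w : List A} :
    LeftSpecial u w ↔ ∃ i j, OccursAt u w (i + 1) ∧ OccursAt u w (j + 1) ∧ u i ≠ u j := by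
  simp only [LeftSpecial, mem_Lang_iff, occursAt_cons]
  constructor
  · rintro ⟨b, c, hbc, ⟨i, rfl, hi⟩, j, rfl, hj⟩
    exact ⟨i, j, hi, hj, hbc⟩
  · rintro ⟨i, j, hi, hj, hij⟩
    exact ⟨_, _, hij, ⟨i, rfl, hi⟩, j, rfl, hj⟩

end Factors

section CutPositions

variable {H : A → List A} {u : ℕ → A}

/-- The position of `u` at which the block `H(uⱼ)` starts in the factorization
`H(u₀)H(u₁)⋯` of `H(u)`. -/
def cutPos (H : A → List A) (u : ℕ → A) (j : ℕ) : ℕ := (wordMap H (factorAt u 0 j)).length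

theorem cutPos_add (H : A → List A) (u : ℕ → A) (j n : ℕ) :
    cutPos H u (j + n) = cutPos H u j + (wordMap H (factorAt u j n)).length := by
  simp [cutPos, factorAt_add, wordMap_append]

theorem cutPos_succ (H : A → List A) (u : ℕ → A) (j : ℕ) :
    cutPos H u (j + 1) = cutPos H u j + (H (u j)).length := by
  rw [cutPos_add, factorAt_one, wordMap_singleton]

theorem cutPos_add_length {v : List A} {j : ℕ} (hv : OccursAt u v j) :
    cutPos H u (j + v.length) = cutPos H u j + (wordMap H v).length := by
  rw [cutPos_add, hv]

theorem cutPos_strictMono (hne : ∀ a, H a ≠ []) (u : ℕ → A) : StrictMono (cutPos H u) :=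
  strictMono_nat_of_lt_succ fun j => by
    rw [cutPos_succ]
    exact Nat.lt_add_of_pos_right (List.length_pos_of_ne_nil (hne _))

theorem getElem?_wordMap_factorAt_zero (hne : ∀ a, H a ≠ []) (x : ℕ → A) {j n : ℕ}
    (hn : n < cutPos H x j) : (wordMap H (factorAt x 0 j))[n]? = some (substSeq H x n) := by
  have prefix_image {i k : ℕ} (hik : i ≤ k) :
      wordMap H (factorAt x 0 i) <+: wordMap H (factorAt x 0 k) := by
    obtain ⟨d, rfl⟩ := Nat.exists_eq_add_of_le hik
    exact ⟨_, by rw [factorAt_add, wordMap_append]⟩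
  have hn' : n < cutPos H x (n + 1) := (cutPos_strictMono hne x).le_apply
  have hsubst : substSeq H x n = (wordMap H (factorAt x 0 (n + 1)))[n]'hn' := by
    rw [substSeq, ← List.getD_eq_getElem _ (x 0) hn']
    simp [factorAt]
  rw [hsubst, List.getElem?_eq_getElem hn]
  rcases le_total j (n + 1) with h | h
  · exact congrArg some ((prefix_image h).getElem hn)
  · exact congrArg some ((prefix_image h).getElem hn').symm

theorem IsFixedPointSubst.occursAt_wordMap_prefix (hu : IsFixedPointSubst H u)
    (hne : ∀ a, H a ≠ []) (j : ℕ) : OccursAt u (wordMap H (factorAt u 0 j)) 0 := by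
  refine List.ext_getElem? fun n => ?_
  rcases lt_or_ge n (wordMap H (factorAt u 0 j)).length with hn | hn
  · rw [getElem?_factorAt u 0 hn, getElem?_wordMap_factorAt_zero hne u hn, hu, zero_add]
  · rw [List.getElem?_eq_none hn, List.getElem?_eq_none ((length_factorAt ..).trans_le hn)]

theorem IsFixedPointSubst.occursAt_wordMap (hu : IsFixedPointSubst H u) (hne : ∀ a, H a ≠ [])
    {v : List A} {j : ℕ} (hv : OccursAt u v j) : OccursAt u (wordMap H v) (cutPos H u j) := by
  have h := hu.occursAt_wordMap_prefix hne (j + v.length)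
  rw [factorAt_add, wordMap_append, occursAt_append, zero_add, zero_add, hv] at h
  exact h.2

theorem IsFixedPointSubst.occursAt_block (hu : IsFixedPointSubst H u) (hne : ∀ a, H a ≠ [])
    (j : ℕ) : OccursAt u (H (u j)) (cutPos H u j) := by
  simpa only [wordMap_singleton] using hu.occursAt_wordMap hne (occursAt_singleton.2 rfl)

theorem IsFixedPointSubst.occursAt_iterate_prefix (hu : IsFixedPointSubst H u)
    (hne : ∀ a, H a ≠ []) (m j : ℕ) : OccursAt u ((wordMap H)^[m] (factorAt u 0 j)) 0 := by
  induction m with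
  | zero => exact occursAt_factorAt u 0 j
  | succ m ih =>
    rw [Function.iterate_succ_apply']
    exact hu.occursAt_wordMap hne ih

theorem IsFixedPointSubst.pow (hu : IsFixedPointSubst H u) (hne : ∀ a, H a ≠ [])
    (m : ℕ) : IsFixedPointSubst (substPow H m) u := by
  funext n
  have hKne := substPow_ne_nil hne m
  have hn : n < cutPos (substPow H m) u (n + 1) := (cutPos_strictMono hKne u).le_apply
  have hocc := hu.occursAt_iterate_prefix hne m (n + 1)
  rw [← wordMap_substPow] at hocc
  have h := getElem?_wordMap_factorAt_zero hKne u hn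
  rw [hocc.getElem? hn, zero_add] at h
  exact (Option.some.inj h).symm

end CutPositions

section Phase

variable {H : A → List A} {u : ℕ → A}

/-- The index `j` and the offset `r` for which position `n` of `u` is the `r`-th letter of the
block `H(uⱼ)` in the factorization `H(u₀)H(u₁)⋯` of `H(u)`. -/
def blockPos (H : A → List A) (u : ℕ → A) : ℕ → ℕ × ℕ
  | 0 => (0, 0)
  | n + 1 =>
    if (blockPos H u n).2 + 1 = (H (u (blockPos H u n).1)).length then
      ((blockPos H u n).1 + 1, 0)
    else ((blockPos H u n).1, (blockPos H u n).2 + 1)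

theorem blockPos_snd_lt (hne : ∀ a, H a ≠ []) (u : ℕ → A) (n : ℕ) :
    (blockPos H u n).2 < (H (u (blockPos H u n).1)).length := by
  induction n with
  | zero => exact List.length_pos_of_ne_nil (hne _)
  | succ n ih =>
    rw [blockPos]
    split_ifs with hlast
    · exact List.length_pos_of_ne_nil (hne _)
    · exact lt_of_le_of_ne ih hlast

theorem cutPos_blockPos (H : A → List A) (u : ℕ → A) (n : ℕ) :
    cutPos H u (blockPos H u n).1 + (blockPos H u n).2 = n := by
  induction n with
  | zero => rfl
  | succ n ih =>
    rw [blockPos]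
    split_ifs with hlast
    · dsimp only
      rw [cutPos_succ, ← hlast]
      omega
    · dsimp only
      omega

theorem exists_cutPos_mem_Icc (hne : ∀ a, H a ≠ []) {B : ℕ} (hB : ∀ a, (H a).length ≤ B)
    (u : ℕ → A) (i : ℕ) : ∃ j, i ≤ cutPos H u j ∧ cutPos H u j ≤ i + B := by
  refine ⟨(blockPos H u i).1 + 1, ?_⟩
  rw [cutPos_succ]
  have hpos := cutPos_blockPos H u i
  have hlt := blockPos_snd_lt hne u i
  have hle := hB (u (blockPos H u i).1)
  omega

/-- The type `a` of the block `H(a)` covering position `n` of `u`, and the offset of `n` in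
this block. -/
def phase (H : A → List A) (u : ℕ → A) (n : ℕ) : A × ℕ :=
  (u (blockPos H u n).1, (blockPos H u n).2)

theorem phase_snd_lt (hne : ∀ a, H a ≠ []) (u : ℕ → A) (n : ℕ) :
    (phase H u n).2 < (H (phase H u n).1).length :=
  blockPos_snd_lt hne u n

theorem phase_succ (H : A → List A) (u : ℕ → A) (n : ℕ) :
    (phase H u n).2 + 1 = (H (phase H u n).1).length ∧ (phase H u (n + 1)).2 = 0 ∨
      (phase H u n).2 + 1 ≠ (H (phase H u n).1).length ∧
        phase H u (n + 1) = ((phase H u n).1, (phase H u n).2 + 1) := by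
  by_cases hlast : (blockPos H u n).2 + 1 = (H (u (blockPos H u n).1)).length
  · exact .inl ⟨hlast, by simp [phase, blockPos, hlast]⟩
  · exact .inr ⟨hlast, by simp [phase, blockPos, hlast]⟩

theorem finite_range_phase [Finite A] (hne : ∀ a, H a ≠ []) (u : ℕ → A) :
    (Set.range (phase H u)).Finite := by
  refine (Set.finite_iUnion fun a : A => (Set.finite_Iio (H a).length).image (Prod.mk a)).subset ?_
  rintro _ ⟨n, rfl⟩
  exact Set.mem_iUnion.2 ⟨_, _, phase_snd_lt hne u n, rfl⟩

theorem IsFixedPointSubst.getElem?_phase (hu : IsFixedPointSubst H u) (hne : ∀ a, H a ≠ [])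
    (n : ℕ) : (H (phase H u n).1)[(phase H u n).2]? = some (u n) := by
  conv_rhs => rw [← cutPos_blockPos H u n]
  exact (hu.occursAt_block hne _).getElem? (phase_snd_lt hne u n)

theorem IsFixedPointSubst.apply_eq_of_phase_eq (hu : IsFixedPointSubst H u)
    (hne : ∀ a, H a ≠ []) {x y : ℕ} (h : phase H u x = phase H u y) : u x = u y :=
  Option.some.inj <| by rw [← hu.getElem?_phase hne, ← hu.getElem?_phase hne, h]

theorem cutPos_eq_of_phase_snd_eq_zero {n : ℕ} (hn : (phase H u n).2 = 0) :
    cutPos H u (blockPos H u n).1 = n := by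
  conv_rhs => rw [← cutPos_blockPos H u n]
  exact (Nat.add_eq_left.2 hn).symm

end Phase

section Recurrence

variable {H : A → List A} {u : ℕ → A}

/-- Every prefix of the infinite word `u` recurs in `u` with bounded gaps. -/
def UniformlyRecurrent (u : ℕ → A) : Prop :=
  ∀ n, ∃ N, ∀ i, ∃ d ≤ N, ∀ s < n, u (i + d + s) = u s

theorem UniformlyRecurrent.exists_apply_ne_apply_add (hrec : UniformlyRecurrent u)
    (haper : ¬ PeriodicSeq u) {p : ℕ} (hp : 0 < p) :
    ∃ N, ∀ i, ∃ d ≤ N, u (i + d) ≠ u (i + d + p) := by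
  obtain ⟨n, hn⟩ : ∃ n, u (n + p) ≠ u n := by
    by_contra! h
    exact haper ⟨p, hp, h⟩
  obtain ⟨N, hN⟩ := hrec (n + p + 1)
  refine ⟨N + n, fun i => ?_⟩
  obtain ⟨d, hd, heq⟩ := hN i
  refine ⟨d + n, by omega, ?_⟩
  rw [← add_assoc, add_assoc _ n p, heq n (by omega), heq (n + p) (by omega)]
  exact hn.symm

theorem nontrivial_of_not_periodicSeq {u : ℕ → A} (hu : ¬ PeriodicSeq u) : Nontrivial A := by
  by_contra h
  have := not_nontrivial_iff_subsingleton.1 h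
  exact hu ⟨1, one_pos, fun _ => Subsingleton.elim _ _⟩

theorem PrimitiveSubst.uniformlyRecurrent [Finite A] [Nontrivial A] (hprim : PrimitiveSubst H)
    (hne : ∀ a, H a ≠ []) (hu : IsFixedPointSubst H u) : UniformlyRecurrent u := by
  intro n
  obtain ⟨m, hm⟩ := hprim.exists_lt_length_iterate n
  obtain ⟨k, -, hk⟩ := hprim
  have hprefix : OccursAt u ((wordMap H)^[m] [u 0]) 0 := by
    simpa only [factorAt_one] using hu.occursAt_iterate_prefix hne m 1
  -- Each block `Hᵐ⁺ᵏ(a)` contains `Hᵐ(u₀)`, a prefix of `u` of length more than `n`.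
  have hblock (a : A) : ∃ x y, substPow H (m + k) a = x ++ (wordMap H)^[m] [u 0] ++ y := by
    obtain ⟨x, y, hxy⟩ := List.append_of_mem (hk a (u 0))
    refine ⟨wordMap (substPow H m) x, wordMap (substPow H m) y, ?_⟩
    rw [substPow, Function.iterate_add_apply, hxy, ← wordMap_substPow, ← wordMap_append,
      ← wordMap_append, List.append_assoc, List.singleton_append]
  obtain ⟨B, hB⟩ := (Set.finite_range fun a => (substPow H (m + k) a).length).bddAbove
  have hB (a : A) : (substPow H (m + k) a).length ≤ B := hB ⟨a, rfl⟩
  have hKne := substPow_ne_nil hne (m + k)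
  refine ⟨B + B, fun i => ?_⟩
  obtain ⟨j, hij, hji⟩ := exists_cutPos_mem_Icc hKne hB u i
  obtain ⟨x, y, hxy⟩ := hblock (u j)
  have hocc := (hu.pow hne (m + k)).occursAt_block hKne j
  have hlen := hB (u j)
  rw [hxy, occursAt_append, occursAt_append] at hocc
  rw [hxy, List.length_append, List.length_append] at hlen
  obtain ⟨d, hd⟩ := Nat.exists_eq_add_of_le hij
  rw [hd, add_assoc] at hocc
  refine ⟨d + x.length, by omega, fun s hs => ?_⟩
  simpa only [zero_add] using
    hocc.1.2.apply_eq hprefix (hs.trans (hm [u 0] (List.cons_ne_nil _ _)))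

end Recurrence

section Synchronization

open scoped Nat

theorem apply_eq_apply_add_factorial_card {α : Type*} {T : Finset α} {f : ℕ → α} {L : ℕ}
    (hT : ∀ n, f n ∈ T) (hstep : ∀ s < L, ∀ t < L, f s = f t → f (s + 1) = f (t + 1)) {x : ℕ}
    (hx : T.card ≤ x) (hxL : x + T.card ! ≤ L) : f x = f (x + T.card !) := by
  obtain ⟨a, p, hp, hap, hf⟩ : ∃ a p, 0 < p ∧ a + p ≤ T.card ∧ f a = f (a + p) := by
    obtain ⟨i, hi, j, hj, hij, hf⟩ := Finset.exists_ne_map_eq_of_card_lt_of_maps_to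
      (s := Finset.range (T.card + 1)) (by simp) (f := f) (fun n _ => hT n)
    rw [Finset.mem_range] at hi hj
    rcases lt_or_gt_of_ne hij with h | h
    · exact ⟨i, j - i, by omega, by omega, by rw [hf]; congr 1; omega⟩
    · exact ⟨j, i - j, by omega, by omega, by rw [← hf]; congr 1; omega⟩
  have hperiod (s : ℕ) (has : a ≤ s) : s + p ≤ L → f s = f (s + p) := by
    induction s, has using Nat.le_induction with
    | base => exact fun _ => hf
    | succ s _ ih =>
      intro hs
      rw [add_right_comm]
      exact hstep _ (by omega) _ (by omega) (ih (by omega))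
  have hmul (k : ℕ) : x + p * k ≤ L → f x = f (x + p * k) := by
    induction k with
    | zero => exact fun _ => rfl
    | succ k ih =>
      rw [mul_add_one, ← add_assoc]
      exact fun hk => (ih (by omega)).trans (hperiod _ (by omega) hk)
  obtain ⟨k, hk⟩ := Nat.dvd_factorial hp (by omega : p ≤ T.card)
  rw [hk] at hxL ⊢
  exact hmul k hxL

variable {H : A → List A} {u : ℕ → A}

/-- Two positions of `u` are aligned if they have the same phase or if both of them are
cuts. -/
def Aligned (H : A → List A) (u : ℕ → A) (x y : ℕ) : Prop :=
  phase H u x = phase H u y ∨ (phase H u x).2 = 0 ∧ (phase H u y).2 = 0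

theorem Aligned.snd_phase_eq_zero_iff {x y : ℕ} (h : Aligned H u x y) :
    (phase H u x).2 = 0 ↔ (phase H u y).2 = 0 := by
  rcases h with h | ⟨hx, hy⟩
  · rw [h]
  · exact iff_of_true hx hy

theorem aligned_succ_of_phase_eq {x y : ℕ} (h : phase H u x = phase H u y) :
    Aligned H u (x + 1) (y + 1) := by
  rcases phase_succ H u x with ⟨hx, hx'⟩ | ⟨hx, hx'⟩ <;>
    rcases phase_succ H u y with ⟨hy, hy'⟩ | ⟨hy, hy'⟩
  · exact .inr ⟨hx', hy'⟩
  · exact absurd (h ▸ hx) hy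
  · exact absurd (h ▸ hy) hx
  · exact .inl (by rw [hx', hy', h])

theorem phase_eq_of_phase_succ_eq {x y : ℕ} (h : phase H u (x + 1) = phase H u (y + 1))
    (h0 : (phase H u (x + 1)).2 ≠ 0) : phase H u x = phase H u y := by
  rcases phase_succ H u x with ⟨-, hx⟩ | ⟨-, hx⟩
  · exact absurd hx h0
  rcases phase_succ H u y with ⟨-, hy⟩ | ⟨-, hy⟩
  · exact absurd (h ▸ hy) h0
  rw [hx, hy, Prod.mk.injEq, add_left_inj] at h
  exact Prod.ext h.1 h.2

section Marked

variable {hne : ∀ a, H a ≠ []}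

theorem MarkedSubst.phase_eq_of_snd_eq_zero (hm : MarkedSubst H hne)
    (hu : IsFixedPointSubst H u) {x y : ℕ} (hxy : u x = u y) (hx : (phase H u x).2 = 0)
    (hy : (phase H u y).2 = 0) : phase H u x = phase H u y := by
  have head_eq {n : ℕ} (hn : (phase H u n).2 = 0) : (H (phase H u n).1).head (hne _) = u n := by
    have h := hu.getElem?_phase hne n
    rwa [hn, ← List.head?_eq_getElem?, List.head?_eq_some_head (hne _), Option.some_inj] at h
  refine Prod.ext (hm.1 ?_) (hx.trans hy.symm)
  exact (head_eq hx).trans (hxy.trans (head_eq hy).symm)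

theorem MarkedSubst.phase_eq_of_succ_snd_eq_zero (hm : MarkedSubst H hne)
    (hu : IsFixedPointSubst H u) {x y : ℕ} (hxy : u x = u y)
    (hx : (phase H u (x + 1)).2 = 0) (hy : (phase H u (y + 1)).2 = 0) :
    phase H u x = phase H u y := by
  have last {n : ℕ} (hn : (phase H u (n + 1)).2 = 0) :
      (phase H u n).2 + 1 = (H (phase H u n).1).length := by
    rcases phase_succ H u n with ⟨h, -⟩ | ⟨-, h⟩
    · exact h
    · simp [h] at hn
  have getLast_eq {n : ℕ} (hn : (phase H u (n + 1)).2 = 0) :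
      (H (phase H u n).1).getLast (hne _) = u n := by
    have h := hu.getElem?_phase hne n
    rwa [eq_tsub_of_add_eq (last hn), ← List.getLast?_eq_getElem?,
      List.getLast?_eq_some_getLast (hne _), Option.some_inj] at h
  have hfst : (phase H u x).1 = (phase H u y).1 :=
    hm.2 ((getLast_eq hx).trans (hxy.trans (getLast_eq hy).symm))
  have hsnd : (phase H u x).2 + 1 = (phase H u y).2 + 1 := by rw [last hx, last hy, hfst]
  exact Prod.ext hfst (Nat.succ_injective hsnd)

theorem Aligned.phase_eq {x y : ℕ} (h : Aligned H u x y) (hm : MarkedSubst H hne)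
    (hu : IsFixedPointSubst H u) (hxy : u x = u y) : phase H u x = phase H u y :=
  h.elim id fun h0 => hm.phase_eq_of_snd_eq_zero hu hxy h0.1 h0.2

theorem Aligned.phase_eq_pred {x y : ℕ} (h : Aligned H u (x + 1) (y + 1))
    (hm : MarkedSubst H hne) (hu : IsFixedPointSubst H u) (hxy : u x = u y) :
    phase H u x = phase H u y := by
  by_cases h0 : (phase H u (x + 1)).2 = 0
  · exact hm.phase_eq_of_succ_snd_eq_zero hu hxy h0 (h.snd_phase_eq_zero_iff.1 h0)
  · exact phase_eq_of_phase_succ_eq (h.resolve_right fun h' => h0 h'.1) h0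

theorem Aligned.of_forall_apply_eq {x y L t : ℕ} (h : Aligned H u (x + t) (y + t))
    (hm : MarkedSubst H hne) (hu : IsFixedPointSubst H u)
    (hagree : ∀ s < L, u (x + s) = u (y + s)) (ht : t ≤ L) {s : ℕ} (hs : s ≤ L) :
    Aligned H u (x + s) (y + s) := by
  rcases le_total t s with hts | hst
  · induction s, hts using Nat.le_induction with
    | base => exact h
    | succ s _ ih =>
      exact aligned_succ_of_phase_eq ((ih (by omega)).phase_eq hm hu (hagree s (by omega)))
  · induction hst using Nat.decreasingInduction with
    | self => exact h
    | of_succ s hst ih =>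
      exact .inl ((ih (by omega)).phase_eq_pred hm hu (hagree s (by omega)))

/-- Away from alignment at most one of the two positions is a cut. The phase of the other one
continues the block, and its letter determines the block that starts at the cut. -/
theorem MarkedSubst.phase_succ_prod_eq (hm : MarkedSubst H hne) (hu : IsFixedPointSubst H u)
    {x y x' y' : ℕ} (hx : phase H u x = phase H u x') (hy : phase H u y = phase H u y')
    (hna : ¬ Aligned H u (x + 1) (y + 1)) (hxy : u (x + 1) = u (y + 1))
    (hxy' : u (x' + 1) = u (y' + 1)) :
    phase H u (x + 1) = phase H u (x' + 1) ∧ phase H u (y + 1) = phase H u (y' + 1) := by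
  rcases aligned_succ_of_phase_eq hx with hx1 | ⟨hx0, hx0'⟩ <;>
    rcases aligned_succ_of_phase_eq hy with hy1 | ⟨hy0, hy0'⟩
  · exact ⟨hx1, hy1⟩
  · refine ⟨hx1, hm.phase_eq_of_snd_eq_zero hu ?_ hy0 hy0'⟩
    rw [← hxy, ← hxy', hu.apply_eq_of_phase_eq hne hx1]
  · refine ⟨hm.phase_eq_of_snd_eq_zero hu ?_ hx0 hx0', hy1⟩
    rw [hxy, hxy', hu.apply_eq_of_phase_eq hne hy1]
  · exact absurd (.inr ⟨hx0, hy0⟩) hna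

theorem MarkedSubst.exists_aligned_of_forall_apply_eq [Finite A] (hm : MarkedSubst H hne)
    (hu : IsFixedPointSubst H u) (hrec : UniformlyRecurrent u) (haper : ¬ PeriodicSeq u) :
    ∃ N, ∀ x y L, N ≤ L → (∀ s < L, u (x + s) = u (y + s)) →
      ∃ t ≤ L, Aligned H u (x + t) (y + t) := by
  let S := (finite_range_phase hne u).toFinset
  let T := S ×ˢ S
  obtain ⟨Q, hQ⟩ := hrec.exists_apply_ne_apply_add haper T.card.factorial_pos
  refine ⟨T.card + Q + T.card ! + 1, fun x y L hL hagree => ?_⟩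
  by_contra! hna
  let f (s : ℕ) : (A × ℕ) × (A × ℕ) := (phase H u (x + s), phase H u (y + s))
  have hT (s : ℕ) : f s ∈ T := by simp [f, T, S]
  have hstep : ∀ s < L - 1, ∀ t < L - 1, f s = f t → f (s + 1) = f (t + 1) := by
    intro s hs t ht hst
    rw [Prod.mk.injEq] at hst
    exact Prod.ext_iff.2 <| hm.phase_succ_prod_eq hu hst.1 hst.2 (hna (s + 1) (by omega))
      (hagree (s + 1) (by omega)) (hagree (t + 1) (by omega))
  obtain ⟨d, hd, hne_add⟩ := hQ (x + T.card)
  rw [add_assoc x, add_assoc x] at hne_add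
  have hperiod := apply_eq_apply_add_factorial_card hT hstep
    (Nat.le_add_right T.card d) (by omega)
  exact hne_add (hu.apply_eq_of_phase_eq hne (congrArg Prod.fst hperiod))

end Marked

end Synchronization

section Desubstitution

variable {H : A → List A} {u : ℕ → A} {hne : ∀ a, H a ≠ []}

theorem IsFixedPointSubst.apply_cutPos_add_eq (hu : IsFixedPointSubst H u)
    (hne : ∀ a, H a ≠ []) {i j : ℕ} (hij : u i = u j) {r : ℕ} (hr : r < (H (u i)).length) :
    u (cutPos H u i + r) = u (cutPos H u j + r) :=
  (hu.occursAt_block hne i).apply_eq (hij ▸ hu.occursAt_block hne j) hr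

theorem IsFixedPointSubst.exists_wordMap_eq_of_cut (hu : IsFixedPointSubst H u)
    (hne : ∀ a, H a ≠ []) {w : List A} {i : ℕ} (hw : OccursAt u w i)
    (hstart : (phase H u i).2 = 0) (hend : (phase H u (i + w.length)).2 = 0) :
    ∃ v j, wordMap H v = w ∧ OccursAt u v j ∧ cutPos H u j = i := by
  have hj := cutPos_eq_of_phase_snd_eq_zero hstart
  have hk := cutPos_eq_of_phase_snd_eq_zero hend
  set j := (blockPos H u i).1
  obtain ⟨n, hn⟩ : ∃ n, (blockPos H u (i + w.length)).1 = j + n :=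
    Nat.exists_eq_add_of_le ((cutPos_strictMono hne u).le_iff_le.1 (by omega))
  have hocc := hu.occursAt_wordMap hne (occursAt_factorAt u j n)
  have hlen : (wordMap H (factorAt u j n)).length = w.length := by
    rw [hn, cutPos_add, hj] at hk
    exact Nat.add_left_cancel hk
  refine ⟨factorAt u j n, j, ?_, occursAt_factorAt u j n, hj⟩
  rw [← hocc, ← hw, hlen, hj]

theorem MarkedSubst.exists_bispecial_of_cut (hm : MarkedSubst H hne) (hu : IsFixedPointSubst H u)
    {w : List A} (hw : Bispecial u w)
    (hcut : ∀ i, OccursAt u w i → (phase H u i).2 = 0 ∧ (phase H u (i + w.length)).2 = 0) :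
    ∃ v, Bispecial u v ∧ wordMap H v = w := by
  obtain ⟨i, i', hi, hi', hright⟩ := rightSpecial_iff.1 hw.1
  obtain ⟨l, l', hl, hl', hleft⟩ := leftSpecial_iff.1 hw.2
  obtain ⟨v, -, rfl, -⟩ := hu.exists_wordMap_eq_of_cut hne hi (hcut i hi).1 (hcut i hi).2
  have desubst {i : ℕ} (hi : OccursAt u (wordMap H v) i) :
      ∃ j, OccursAt u v j ∧ cutPos H u j = i := by
    obtain ⟨v', j, hv', hj, hji⟩ :=
      hu.exists_wordMap_eq_of_cut hne hi (hcut i hi).1 (hcut i hi).2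
    exact ⟨j, wordMap_injective hne hm.1 hv' ▸ hj, hji⟩
  have desubst_succ {l : ℕ} (hl : OccursAt u (wordMap H v) (l + 1)) :
      ∃ k, OccursAt u v (k + 1) ∧ cutPos H u k + (H (u k)).length = l + 1 := by
    obtain ⟨_ | k, hk, hkl⟩ := desubst hl
    · exact absurd hkl (Nat.succ_ne_zero l).symm
    · exact ⟨k, hk, by rw [← cutPos_succ, hkl]⟩
  refine ⟨v, ⟨rightSpecial_iff.2 ?_, leftSpecial_iff.2 ?_⟩, rfl⟩
  · obtain ⟨j, hj, rfl⟩ := desubst hi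
    obtain ⟨j', hj', rfl⟩ := desubst hi'
    rw [← cutPos_add_length hj, ← cutPos_add_length hj'] at hright
    exact ⟨j, j', hj, hj', fun h =>
      hright (hu.apply_cutPos_add_eq hne h (List.length_pos_of_ne_nil (hne _)))⟩
  · obtain ⟨k, hk, hkl⟩ := desubst_succ hl
    obtain ⟨k', hk', hkl'⟩ := desubst_succ hl'
    refine ⟨k, k', hk, hk', fun h => hleft ?_⟩
    have hpos := List.length_pos_of_ne_nil (hne (u k))
    rw [← h] at hkl'
    convert hu.apply_cutPos_add_eq hne h (Nat.sub_one_lt_of_lt hpos) using 2 <;> omega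

theorem MarkedSubst.exists_bispecial_desubst [Finite A] (hm : MarkedSubst H hne)
    (hu : IsFixedPointSubst H u) (hrec : UniformlyRecurrent u) (haper : ¬ PeriodicSeq u) :
    ∃ N, ∀ w, Bispecial u w → N < w.length → ∃ v, Bispecial u v ∧ wordMap H v = w := by
  obtain ⟨N, hN⟩ := hm.exists_aligned_of_forall_apply_eq hu hrec haper
  refine ⟨N, fun w hw hNw => hm.exists_bispecial_of_cut hu hw fun k hk => ?_⟩
  have aligned {i j : ℕ} (hi : OccursAt u w i) (hj : OccursAt u w j) {s : ℕ}
      (hs : s ≤ w.length) : Aligned H u (i + s) (j + s) := by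
    have hagree (s : ℕ) (hs : s < w.length) := hi.apply_eq hj hs
    obtain ⟨t, ht, halign⟩ := hN i j w.length hNw.le hagree
    exact halign.of_forall_apply_eq hm hu hagree ht hs
  constructor
  · obtain ⟨i, j, hi, hj, hij⟩ := leftSpecial_iff.1 hw.2
    have hcut : (phase H u (i + 1)).2 = 0 := by
      by_contra h0
      have hphase := (aligned hi hj (Nat.zero_le _)).resolve_right fun h => h0 h.1
      exact hij (hu.apply_eq_of_phase_eq hne (phase_eq_of_phase_succ_eq hphase h0))
    exact (aligned hi hk (Nat.zero_le _)).snd_phase_eq_zero_iff.1 hcut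
  · obtain ⟨i, j, hi, hj, hij⟩ := rightSpecial_iff.1 hw.1
    have hcut := (aligned hi hj le_rfl).resolve_left fun h => hij (hu.apply_eq_of_phase_eq hne h)
    exact (aligned hi hk le_rfl).snd_phase_eq_zero_iff.1 hcut.1

end Desubstitution

section PerronFrobenius

open Matrix

variable {ι : Type*} [Fintype ι] [DecidableEq ι]

theorem le_mulVec_apply_of_mem_rowStochastic {P : Matrix ι ι ℝ} (hP : P ∈ rowStochastic ℝ ι)
    {x : ι → ℝ} {m : ℝ} (hx : ∀ i, m ≤ x i) (i : ι) : m ≤ (P *ᵥ x) i :=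
  calc m = ∑ j, P i j * m := by rw [← Finset.sum_mul, sum_row_of_mem_rowStochastic hP, one_mul]
    _ ≤ ∑ j, P i j * x j := Finset.sum_le_sum fun j _ =>
      mul_le_mul_of_nonneg_left (hx j) (nonneg_of_mem_rowStochastic hP)

theorem mulVec_apply_le_sub_mul_of_mem_rowStochastic {P : Matrix ι ι ℝ}
    (hP : P ∈ rowStochastic ℝ ι) {x : ι → ℝ} {M δ : ℝ} {i k : ι} (hδ : δ ≤ P i k)
    (hx : ∀ j, x j ≤ M) : (P *ᵥ x) i ≤ M - δ * (M - x k) := by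
  have hnonneg (j : ι) : 0 ≤ P i j * (M - x j) :=
    mul_nonneg (nonneg_of_mem_rowStochastic hP) (sub_nonneg.2 (hx j))
  have hgap : δ * (M - x k) ≤ M - (P *ᵥ x) i :=
    calc δ * (M - x k) ≤ P i k * (M - x k) :=
          mul_le_mul_of_nonneg_right hδ (sub_nonneg.2 (hx k))
      _ ≤ ∑ j, P i j * (M - x j) :=
          Finset.single_le_sum (f := fun j => P i j * (M - x j)) (fun j _ => hnonneg j)
            (Finset.mem_univ k)
      _ = M - (P *ᵥ x) i := by
          simp only [mul_sub, Finset.sum_sub_distrib, ← Finset.sum_mul,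
            sum_row_of_mem_rowStochastic hP, one_mul, mulVec, dotProduct]
  linarith

theorem mulVec_apply_le_of_mem_rowStochastic {P : Matrix ι ι ℝ} (hP : P ∈ rowStochastic ℝ ι)
    {x : ι → ℝ} {M : ℝ} (hx : ∀ j, x j ≤ M) (i : ι) : (P *ᵥ x) i ≤ M := by
  simpa using mulVec_apply_le_sub_mul_of_mem_rowStochastic hP
    (nonneg_of_mem_rowStochastic hP (i := i) (j := i)) hx

theorem exists_le_mul_pow_of_antitone {d : ℕ → ℝ} (hd : Antitone d) (hd0 : 0 ≤ d 0) {k : ℕ}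
    (hk : k ≠ 0) {ε : ℝ} (hε0 : 0 < ε) (hε1 : ε < 1) (hcontr : ∀ n, d (n + k) ≤ ε * d n) :
    ∃ K ρ : ℝ, 0 < ρ ∧ ρ < 1 ∧ ∀ n, d n ≤ K * ρ ^ n := by
  set ρ : ℝ := ε ^ (k : ℝ)⁻¹
  have hρ0 : 0 < ρ := Real.rpow_pos_of_pos hε0 _
  have hρ1 : ρ < 1 := Real.rpow_lt_one hε0.le hε1 (by positivity)
  have hρk : ρ ^ k = ε := Real.rpow_inv_natCast_pow hε0.le hk
  refine ⟨d 0 / ε, ρ, hρ0, hρ1, fun n => ?_⟩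
  induction n using Nat.strong_induction_on with
  | _ n ih =>
    rcases lt_or_ge n k with hnk | hkn
    · calc d n ≤ d 0 := hd n.zero_le
        _ = d 0 / ε * ρ ^ k := by rw [hρk, div_mul_cancel₀ _ hε0.ne']
        _ ≤ d 0 / ε * ρ ^ n := by
          gcongr ?_ * ?_
          exact pow_le_pow_of_le_one hρ0.le hρ1.le hnk.le
    · obtain ⟨n, rfl⟩ := Nat.exists_eq_add_of_le' hkn
      calc d (n + k) ≤ ε * d n := hcontr n
        _ ≤ ε * (d 0 / ε * ρ ^ n) := by gcongr; exact ih n (by omega)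
        _ = d 0 / ε * ρ ^ (n + k) := by rw [pow_add, hρk]; ring

section Stochastic

variable {P : Matrix ι ι ℝ} {x : ι → ℝ}

/-- The spread `max x - min x` of a vector `x`. Stochastic matrices with positive entries
contract it. -/
noncomputable def spread (x : ι → ℝ) : ℝ := (⨆ i, x i) - ⨅ i, x i

variable [Nonempty ι]

theorem iInf_le_iInf_mulVec (hP : P ∈ rowStochastic ℝ ι) (x : ι → ℝ) :
    ⨅ i, x i ≤ ⨅ i, (P *ᵥ x) i :=
  le_ciInf (le_mulVec_apply_of_mem_rowStochastic hP (Finite.ciInf_le x))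

theorem iSup_mulVec_le_iSup (hP : P ∈ rowStochastic ℝ ι) (x : ι → ℝ) :
    ⨆ i, (P *ᵥ x) i ≤ ⨆ i, x i :=
  ciSup_le (mulVec_apply_le_of_mem_rowStochastic hP (Finite.le_ciSup x))

theorem spread_mulVec_le_mul (hP : P ∈ rowStochastic ℝ ι) {δ : ℝ} (hδ : ∀ i j, δ ≤ P i j)
    (x : ι → ℝ) : spread (P *ᵥ x) ≤ (1 - δ) * spread x := by
  obtain ⟨k, hk⟩ := exists_eq_ciInf_of_finite (f := x)
  have hsup : ⨆ i, (P *ᵥ x) i ≤ (⨆ i, x i) - δ * spread x := ciSup_le fun i => by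
    rw [spread, ← hk]
    exact mulVec_apply_le_sub_mul_of_mem_rowStochastic hP (hδ i k) (Finite.le_ciSup x)
  calc spread (P *ᵥ x) ≤ (⨆ i, x i) - δ * spread x - ⨅ i, x i :=
        sub_le_sub hsup (iInf_le_iInf_mulVec hP x)
    _ = (1 - δ) * spread x := by rw [spread]; ring

theorem exists_spread_pow_mulVec_le (hP : P ∈ rowStochastic ℝ ι) (hprim : P.IsPrimitive)
    (x : ι → ℝ) :
    ∃ K ρ : ℝ, 0 < ρ ∧ ρ < 1 ∧ ∀ n, spread (P ^ n *ᵥ x) ≤ K * ρ ^ n := by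
  obtain ⟨k, hk, hpos⟩ := hprim.exists_pos_pow
  obtain ⟨⟨i₀, j₀⟩, hmin⟩ := Finite.exists_min fun ij : ι × ι => (P ^ k) ij.1 ij.2
  let δ := min ((P ^ k) i₀ j₀) (1 / 2)
  have hδ0 : 0 < δ := lt_min (hpos i₀ j₀) one_half_pos
  have hδ1 : δ < 1 := (min_le_right _ _).trans_lt one_half_lt_one
  have hδ (i j : ι) : δ ≤ (P ^ k) i j := (min_le_left _ _).trans (hmin (i, j))
  refine exists_le_mul_pow_of_antitone (antitone_nat_of_succ_le fun n => ?_) ?_ hk.ne'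
    (sub_pos.2 hδ1) (sub_lt_self 1 hδ0) fun n => ?_
  · rw [pow_succ', ← mulVec_mulVec]
    exact sub_le_sub (iSup_mulVec_le_iSup hP _) (iInf_le_iInf_mulVec hP _)
  · have i := Classical.arbitrary ι
    exact sub_nonneg.2 ((Finite.ciInf_le _ i).trans (Finite.le_ciSup _ i))
  · rw [add_comm, pow_add, ← mulVec_mulVec]
    exact spread_mulVec_le_mul (pow_mem hP k) hδ _

theorem exists_abs_pow_mulVec_sub_le (hP : P ∈ rowStochastic ℝ ι) (hprim : P.IsPrimitive)
    (hx : ∀ i, 0 < x i) :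
    ∃ c K ρ : ℝ, 0 < c ∧ 0 < ρ ∧ ρ < 1 ∧ ∀ n i, |(P ^ n *ᵥ x) i - c| ≤ K * ρ ^ n := by
  obtain ⟨K, ρ, hρ0, hρ1, hosc⟩ := exists_spread_pow_mulVec_le hP hprim x
  let lo (n : ℕ) : ℝ := ⨅ i, (P ^ n *ᵥ x) i
  let hi (n : ℕ) : ℝ := ⨆ i, (P ^ n *ᵥ x) i
  have hlo : Monotone lo := monotone_nat_of_le_succ fun n => by
    simp only [lo, pow_succ', ← mulVec_mulVec]
    exact iInf_le_iInf_mulVec hP _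
  have hhi : Antitone hi := antitone_nat_of_succ_le fun n => by
    simp only [hi, pow_succ', ← mulVec_mulVec]
    exact iSup_mulVec_le_iSup hP _
  have hlohi : lo ≤ hi := fun n =>
    (Finite.ciInf_le _ (Classical.arbitrary ι)).trans (Finite.le_ciSup _ _)
  have hc (n : ℕ) : ⨆ m, lo m ∈ Set.Icc (lo n) (hi n) :=
    Set.mem_iInter.1 (hlo.ciSup_mem_iInter_Icc_of_antitone hhi hlohi) n
  refine ⟨⨆ m, lo m, K, ρ, ?_, hρ0, hρ1, fun n i => ?_⟩
  · obtain ⟨k, hk⟩ := exists_eq_ciInf_of_finite (f := x)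
    have hlo0 : lo 0 = x k := by simp [lo, hk]
    exact (hx k).trans_le (hlo0 ▸ (hc 0).1)
  · have hmem : (P ^ n *ᵥ x) i ∈ Set.Icc (lo n) (hi n) :=
      ⟨Finite.ciInf_le _ i, Finite.le_ciSup _ i⟩
    exact (Real.dist_le_of_mem_Icc hmem (hc n)).trans (hosc n)

end Stochastic

/-- The matrix `D⁻¹MD / lam` with `D = diag(v)`. It is stochastic if `v` is an eigenvector of `M`
for the eigenvalue `lam`. -/
noncomputable def perronNormalization (M : Matrix ι ι ℝ) (v : ι → ℝ) (lam : ℝ) : Matrix ι ι ℝ :=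
  of fun i j => M i j * v j / (lam * v i)

section Normalization

variable {M : Matrix ι ι ℝ} {v : ι → ℝ} {lam : ℝ}

theorem perronNormalization_pow_apply (hv : ∀ i, v i ≠ 0) (n : ℕ) (i j : ι) :
    (perronNormalization M v lam ^ n) i j = (M ^ n) i j * v j / (lam ^ n * v i) := by
  induction n generalizing j with
  | zero =>
    rcases eq_or_ne i j with rfl | hij
    · simp [hv i]
    · simp [one_apply_ne hij]
  | succ n ih =>
    simp only [pow_succ, mul_apply, ih, Finset.sum_mul, Finset.sum_div]
    refine Finset.sum_congr rfl fun k _ => ?_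
    rw [perronNormalization, of_apply, div_mul_div_comm,
      ← mul_div_mul_right _ (lam ^ n * lam * v i) (hv k)]
    ring

theorem pow_mulVec_apply_eq_perronNormalization (hv : ∀ i, v i ≠ 0) (hlam : lam ≠ 0) (n : ℕ)
    (x : ι → ℝ) (i : ι) :
    (M ^ n *ᵥ x) i = lam ^ n * v i * (perronNormalization M v lam ^ n *ᵥ (x / v)) i := by
  simp only [mulVec, dotProduct, perronNormalization_pow_apply hv, Pi.div_apply, Finset.mul_sum]
  refine Finset.sum_congr rfl fun j _ => ?_
  have hvi := hv i
  have hvj := hv j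
  field_simp

theorem perronNormalization_mem_rowStochastic (hM : ∀ i j, 0 ≤ M i j) (hv : ∀ i, 0 < v i)
    (hlam : 0 < lam) (hev : M *ᵥ v = lam • v) :
    perronNormalization M v lam ∈ rowStochastic ℝ ι := by
  refine mem_rowStochastic_iff_sum.2 ⟨fun i j => ?_, fun i => ?_⟩
  · exact div_nonneg (mul_nonneg (hM i j) (hv j).le) (mul_pos hlam (hv i)).le
  · have hsum : ∑ j, M i j * v j = lam * v i := congrFun hev i
    simp only [perronNormalization, of_apply]
    rw [← Finset.sum_div, hsum, div_self (mul_pos hlam (hv i)).ne']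

theorem perronNormalization_isPrimitive (hM : M.IsPrimitive) (hv : ∀ i, 0 < v i)
    (hlam : 0 < lam) : (perronNormalization M v lam).IsPrimitive := by
  obtain ⟨k, hk, hpos⟩ := hM.exists_pos_pow
  refine ⟨fun i j => ?_, k, hk, fun i j => ?_⟩
  · exact div_nonneg (mul_nonneg (hM.nonneg i j) (hv j).le) (mul_pos hlam (hv i)).le
  · rw [perronNormalization_pow_apply fun i => (hv i).ne']
    exact div_pos (mul_pos (hpos i j) (hv j)) (mul_pos (pow_pos hlam k) (hv i))

variable [Nonempty ι]

theorem eigenvalue_pos_of_isPrimitive (hM : M.IsPrimitive) (hv : ∀ i, 0 < v i)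
    (hev : M *ᵥ v = lam • v) : 0 < lam := by
  have i := Classical.arbitrary ι
  have hnonneg : 0 ≤ lam * v i := by
    rw [← smul_eq_mul, ← Pi.smul_apply, ← hev]
    exact Finset.sum_nonneg fun j _ => mul_nonneg (hM.nonneg i j) (hv j).le
  refine (nonneg_of_mul_nonneg_left hnonneg (hv i)).lt_of_ne' ?_
  rintro rfl
  obtain ⟨k, hk, hpos⟩ := hM.exists_pos_pow
  have hzero : M ^ k *ᵥ v = 0 := by
    rw [← Nat.sub_one_add_one hk.ne', pow_succ, ← mulVec_mulVec, hev, zero_smul, mulVec_zero]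
  have hsum : 0 < (M ^ k *ᵥ v) i :=
    Finset.sum_pos (fun j _ => mul_pos (hpos i j) (hv j)) Finset.univ_nonempty
  rw [hzero] at hsum
  exact lt_irrefl 0 hsum

theorem exists_abs_pow_mulVec_sub_mul_pow_le (hM : M.IsPrimitive) (hv : ∀ i, 0 < v i)
    (hev : M *ᵥ v = lam • v) {x : ι → ℝ} (hx : ∀ i, 0 < x i) :
    ∃ c K θ : ℝ, 0 < c ∧ 0 < θ ∧ θ < lam ∧
      ∀ n i, |(M ^ n *ᵥ x) i - c * v i * lam ^ n| ≤ K * v i * θ ^ n := by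
  have hlam := eigenvalue_pos_of_isPrimitive hM hv hev
  obtain ⟨c, K, ρ, hc, hρ0, hρ1, hconv⟩ :=
    exists_abs_pow_mulVec_sub_le (x := x / v)
      (perronNormalization_mem_rowStochastic hM.nonneg hv hlam hev)
      (perronNormalization_isPrimitive hM hv hlam) fun i => div_pos (hx i) (hv i)
  refine ⟨c, K, lam * ρ, hc, mul_pos hlam hρ0, mul_lt_of_lt_one_right hlam hρ1, fun n i => ?_⟩
  have hpos : 0 < lam ^ n * v i := mul_pos (pow_pos hlam n) (hv i)
  calc |(M ^ n *ᵥ x) i - c * v i * lam ^ n|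
      = lam ^ n * v i * |(perronNormalization M v lam ^ n *ᵥ (x / v)) i - c| := by
        rw [pow_mulVec_apply_eq_perronNormalization (fun i => (hv i).ne') hlam.ne',
          mul_assoc c, mul_comm c, mul_comm (v i), ← mul_sub, abs_mul, abs_of_pos hpos]
    _ ≤ lam ^ n * v i * (K * ρ ^ n) := mul_le_mul_of_nonneg_left (hconv n i) hpos.le
    _ = K * v i * (lam * ρ) ^ n := by rw [mul_pow]; ring

end Normalization

end PerronFrobenius

section Parikh

open Matrix

variable [DecidableEq A]

/-- The Parikh vector of a word, whose entries are the numbers of occurrences of the letters. -/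
def parikh (w : List A) : A → ℝ := fun a => w.count a

theorem parikh_append (x y : List A) : parikh (x ++ y) = parikh x + parikh y := by
  funext a
  simp [parikh]

theorem parikh_singleton (a : A) : parikh [a] = Pi.single a 1 := by
  funext b
  rcases eq_or_ne a b with rfl | hab
  · simp [parikh]
  · simp [parikh, hab]

theorem parikh_nonneg (w : List A) (a : A) : 0 ≤ parikh w a :=
  Nat.cast_nonneg _

theorem parikh_pos_iff {w : List A} {a : A} : 0 < parikh w a ↔ a ∈ w := by
  rw [parikh, Nat.cast_pos, List.count_pos_iff]

variable [Fintype A] {H : A → List A} {lam : ℝ}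

theorem parikh_dotProduct_one (w : List A) : parikh w ⬝ᵥ 1 = w.length := by
  rw [dotProduct_one, ← Multiset.coe_card,
    ← Multiset.sum_count_eq_card fun a _ => Finset.mem_univ a]
  simp [parikh]

theorem parikh_wordMap (H : A → List A) (w : List A) :
    parikh (wordMap H w) = parikh w ᵥ* incMat H := by
  induction w with
  | nil =>
    have hnil : parikh ([] : List A) = 0 := funext fun _ => Nat.cast_zero
    rw [hnil, zero_vecMul]
    exact hnil
  | cons a w ih =>
    rw [wordMap_cons, ← List.singleton_append, parikh_append, parikh_append, add_vecMul, ih,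
      parikh_singleton, single_one_vecMul]
    rfl

theorem parikh_iterate_wordMap (H : A → List A) (n : ℕ) (w : List A) :
    parikh ((wordMap H)^[n] w) = parikh w ᵥ* incMat H ^ n := by
  induction n with
  | zero => simp
  | succ n ih => rw [Function.iterate_succ_apply', parikh_wordMap, ih, vecMul_vecMul, pow_succ]

theorem length_iterate_wordMap (H : A → List A) (n : ℕ) (w : List A) :
    (((wordMap H)^[n] w).length : ℝ) = parikh w ⬝ᵥ (incMat H ^ n *ᵥ 1) := by
  rw [← parikh_dotProduct_one, parikh_iterate_wordMap, dotProduct_mulVec]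

theorem PrimitiveSubst.isPrimitive_incMat (hprim : PrimitiveSubst H) :
    (incMat H).IsPrimitive := by
  obtain ⟨k, hk, hmem⟩ := hprim
  refine ⟨fun a b => Nat.cast_nonneg _, k, hk, fun a b => ?_⟩
  have hrow : parikh ((wordMap H)^[k] [a]) = (incMat H ^ k) a := by
    rw [parikh_iterate_wordMap, parikh_singleton, single_one_vecMul]
    rfl
  rw [← hrow]
  exact parikh_pos_iff.2 (hmem a b)

variable [Nonempty A]

theorem PrimitiveSubst.exists_abs_length_iterate_sub_le (hprim : PrimitiveSubst H)
    (hlam : IsPerronValue H lam) :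
    ∃ θ : ℝ, 0 < θ ∧ θ < lam ∧ ∀ w : List A, w ≠ [] → ∃ c : ℝ, 0 < c ∧ ∃ K : ℝ,
      ∀ n, |(((wordMap H)^[n] w).length : ℝ) - c * lam ^ n| ≤ K * θ ^ n := by
  obtain ⟨v, hv, hev⟩ := hlam
  obtain ⟨c, K, θ, hc, hθ0, hθ, hasymp⟩ :=
    exists_abs_pow_mulVec_sub_mul_pow_le hprim.isPrimitive_incMat hv hev
      (x := 1) fun _ => one_pos
  refine ⟨θ, hθ0, hθ, fun w hw => ⟨c * (parikh w ⬝ᵥ v), mul_pos hc ?_, K * (parikh w ⬝ᵥ v), ?_⟩⟩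
  · obtain ⟨a, ha⟩ := List.exists_mem_of_ne_nil w hw
    exact Finset.sum_pos' (fun b _ => mul_nonneg (parikh_nonneg w b) (hv b).le)
      ⟨a, Finset.mem_univ a, mul_pos (parikh_pos_iff.2 ha) (hv a)⟩
  · intro n
    calc |(((wordMap H)^[n] w).length : ℝ) - c * (parikh w ⬝ᵥ v) * lam ^ n|
        = |∑ a, parikh w a * ((incMat H ^ n *ᵥ 1) a - c * v a * lam ^ n)| := by
          rw [length_iterate_wordMap]
          simp only [dotProduct, mul_sub, Finset.sum_sub_distrib, Finset.mul_sum, Finset.sum_mul]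
          congr! 3
          ring
      _ ≤ ∑ a, parikh w a * (K * v a * θ ^ n) := by
          refine (Finset.abs_sum_le_sum_abs _ _).trans (Finset.sum_le_sum fun a _ => ?_)
          rw [abs_mul, abs_of_nonneg (parikh_nonneg w a)]
          exact mul_le_mul_of_nonneg_left (hasymp n a) (parikh_nonneg w a)
      _ = K * (parikh w ⬝ᵥ v) * θ ^ n := by
          simp only [dotProduct, Finset.mul_sum, Finset.sum_mul]
          exact Finset.sum_congr rfl fun a _ => by ring

theorem PrimitiveSubst.exists_finset_abs_length_iterate_sub_le (hprim : PrimitiveSubst H)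
    (hlam : IsPerronValue H lam) :
    ∃ θ : ℝ, 0 < θ ∧ θ < lam ∧ ∀ N : ℕ, ∃ C : Finset ℝ, (∀ c ∈ C, 0 < c) ∧ ∃ M : ℝ, 0 < M ∧
      ∀ (z : List A) (n : ℕ), z.length ≤ N →
        ∃ c ∈ C, ∃ m, |(((wordMap H)^[n] z).length : ℝ) - c * lam ^ m| ≤ M * θ ^ m := by
  obtain ⟨θ, hθ0, hθ, hasymp⟩ := hprim.exists_abs_length_iterate_sub_le hlam
  have hasymp (z : List A) : ∃ c : ℝ, 0 < c ∧ ∃ K : ℝ, ∀ n, ∃ m,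
      |(((wordMap H)^[n] z).length : ℝ) - c * lam ^ m| ≤ K * θ ^ m := by
    rcases eq_or_ne z [] with rfl | hz
    · exact ⟨1, one_pos, 1, fun n => ⟨0, by simp [iterate_wordMap_nil]⟩⟩
    · obtain ⟨c, hc, K, hK⟩ := hasymp z hz
      exact ⟨c, hc, K, fun n => ⟨n, hK n⟩⟩
  choose c hc K hK using hasymp
  refine ⟨θ, hθ0, hθ, fun N => ?_⟩
  have hfin : {z : List A | z.length ≤ N}.Finite := List.finite_length_le A N
  obtain ⟨M, hM⟩ := (hfin.image K).bddAbove
  refine ⟨hfin.toFinset.image c, by simp [hc], max M 1, by positivity, fun z n hz => ?_⟩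
  obtain ⟨m, hm⟩ := hK z n
  refine ⟨c z, Finset.mem_image_of_mem c (hfin.mem_toFinset.2 hz), m, hm.trans ?_⟩
  gcongr
  exact (hM ⟨z, hz, rfl⟩).trans (le_max_left M 1)

end Parikh

/-- The lengths of bispecial words are of the form `c·λⁿ + O(θⁿ)`
with `c` in a finite set of positive reals and `0 < θ < λ`, where `λ` is the
Perron–Frobenius eigenvalue of the incidence matrix. -/
theorem bispecial_length_asymptotics
    {A : Type*} [Fintype A] [DecidableEq A] [TopologicalSpace A] [DiscreteTopology A]
    (H : A → List A) (hne : ∀ a, H a ≠ [])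
    (hprim : PrimitiveSubst H) (haper : AperiodicSubst H)
    (hmarked : MarkedSubst H hne)
    (u : ℕ → A) (hu : IsFixedPointSubst H u)
    (lam : ℝ) (hlam : IsPerronValue H lam) :
    ∃ θ : ℝ, 0 < θ ∧ θ < lam ∧
      ∃ C : Finset ℝ, (∀ c ∈ C, 0 < c) ∧
        ∃ M : ℝ, 0 < M ∧
          ∀ w : List A, w ∈ Lang u → Bispecial u w →
            ∃ c ∈ C, ∃ n : ℕ, |(w.length : ℝ) - c * lam ^ n| ≤ M * θ ^ n := by
  have hu_aper := haper u hu
  have := nontrivial_of_not_periodicSeq hu_aper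
  have hrec := hprim.uniformlyRecurrent hne hu
  obtain ⟨N, hdesubst⟩ := hmarked.exists_bispecial_desubst hu hrec hu_aper
  obtain ⟨θ, hθ0, hθ, hasymp⟩ := hprim.exists_finset_abs_length_iterate_sub_le hlam
  obtain ⟨C, hC, M, hM, hbound⟩ := hasymp N
  refine ⟨θ, hθ0, hθ, C, hC, M, hM, fun w _ hw => ?_⟩
  obtain ⟨n, z, hz, rfl⟩ := hprim.exists_iterate_of_forall_desubst hdesubst hw
  exact hbound z n hz
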